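/- There exists an absolute constant C > 0 such that for all integers n ≥ m ≥ 1, writing u = n/m, one has |log p_{n,m} − log ρ(u) − u·ξ(u)/(2m)| ≤ C·( u·(log(u+1))²/m² + 1/u ). -/

import Mathlib

open Real

noncomputable section

/-- Predicate characterizing the Dickman function `ρ : [0,∞) → (0,∞)`:
continuous on `[0,∞)`, positive, equal to `1` on `[0,1]`, and satisfying the
delay differential equation `t·ρ'(t) + ρ(t-1) = 0` for `t > 1`. -/
def IsDickman (ρ : ℝ → ℝ) : Prop :=
  ContinuousOn ρ (Set.Ici 0) ∧
  (∀ t : ℝ, 0 ≤ t → 0 < ρ t) ∧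
  (∀ t ∈ Set.Icc (0:ℝ) 1, ρ t = 1) ∧
  (∀ t : ℝ, 1 < t → HasDerivAt ρ (-(ρ (t - 1)) / t) t)

/-- `ξ(u)`: for `u > 1`, the unique positive solution of `e^ξ = 1 + u·ξ`; otherwise `0`. -/
def xi (u : ℝ) : ℝ :=
  open Classical in
  if h : ∃ x : ℝ, 0 < x ∧ Real.exp x = 1 + u * x then h.choose else 0

/-- `p_{n,m}`: probability that a uniformly random permutation of `{1,…,n}` is `m`-friable,
i.e. has no cycle of length greater than `m`. -/
def permProb (n m : ℕ) : ℝ :=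
  (Nat.card {σ : Equiv.Perm (Fin n) // ∀ c ∈ σ.cycleType, c ≤ m} : ℝ) /
    (Nat.factorial n : ℝ)

/-- `p_{n,m,q}`: proportion of monic polynomials of degree `n` over a finite field `F`
(of cardinality `q`) that are `m`-friable, i.e. all of whose monic irreducible factors
have degree at most `m`. -/
def polyProb (F : Type) [Field F] [Fintype F] (n m : ℕ) : ℝ :=
  (Nat.card {f : Polynomial F // f.Monic ∧ f.natDegree = n ∧
      ∀ p : Polynomial F, p.Monic → Irreducible p → p ∣ f → p.natDegree ≤ m} : ℝ) /
    (Fintype.card F : ℝ) ^ n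

/-- `F_q(z) = ∏_{deg P ≤ m} (1 - (z/q)^{deg P})⁻¹`, the product over monic irreducible
polynomials `P` over `F` of degree at most `m`. -/
def FqFun (F : Type) [Field F] [Fintype F] (m : ℕ) (z : ℝ) : ℝ :=
  ∏ᶠ p ∈ {p : Polynomial F | p.Monic ∧ Irreducible p ∧ p.natDegree ≤ m},
    (1 - (z / (Fintype.card F : ℝ)) ^ p.natDegree)⁻¹

/-- `G_q(z) = F_q(z) · exp(-∑_{i=1}^m z^i/i)`. -/
def Gq (F : Type) [Field F] [Fintype F] (m : ℕ) (z : ℝ) : ℝ :=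
  FqFun F m z * Real.exp (-(∑ i ∈ Finset.Icc 1 m, z ^ i / (i : ℝ)))

/-- The coefficients `d_{m,i}`. -/
def dcoef (m i : ℕ) : ℝ :=
  if i = m then -(1 / (m : ℝ)) * ∑ j ∈ Finset.Icc 2 m, (1 : ℝ) / (j : ℝ)
  else Real.Gamma ((i : ℝ) + (i : ℝ) / (m : ℝ)) /
    (((m : ℝ) - (i : ℝ)) * (Nat.factorial i : ℝ) * Real.Gamma (1 + (i : ℝ) / (m : ℝ)))

/-- `T(s) = ∫₀^s ((e^t - 1)/t)·((t/m)/(1 - e^{-t/m}) - 1) dt`, integrand extended by `0` at `t = 0`. -/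
def Tfun (m : ℕ) (s : ℝ) : ℝ :=
  ∫ t in (0:ℝ)..s,
    if t = 0 then 0 else
      ((Real.exp t - 1) / t) * ((t / (m : ℝ)) / (1 - Real.exp (-t / (m : ℝ))) - 1)

end

/-! Removing the cycle that contains a marked point gives `n p_n = ∑_{j ≤ m} p_{n - j}`, a discrete
analogue of `u ρ(u) = ∫_{u-1}^u ρ`. Replacing each term of the sum by the integral over a unit cell
centred at it turns the window of length `m` into one of length `m + 1/2`. Convexity of `ρ` on
`[1, ∞)` then gives `p_{n,m} ≤ ρ(n / (m + 1/2))`. In the other direction, as long as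
`log u = O(m)`, the quadrature error per step is of second order in the decay rate, and `p_{n,m}`
is at least `ρ((n + 1) / (m + 1/2))` up to a factor `exp(-O(u log² u / m²))`.

It remains to see how `log ρ` changes when its argument moves from `u` by about `u / (2m)`. The
decay rate `-ρ'/ρ` is increasing, so `log ρ` is concave. Comparing `ρ` with its log-tangent and its
log-chord in `u ρ(u) = ∫_{u-1}^u ρ` places the decay rate between `ξ(u)` and `ξ(u) + 1/u`. Hence the
change is `u ξ(u) / (2m)` up to the stated error. -/

section Friable

open Finset Nat.Partition

/-- The order `z_λ = ∏ k, k ^ (count k) * (count k)!` of the centralizer of a permutation whose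
cycle lengths, fixed points included, form the multiset `s`. -/
def centralizerCard (s : Multiset ℕ) : ℕ := s.prod * ∏ k ∈ s.toFinset, (s.count k).factorial

lemma centralizerCard_cons (j : ℕ) (s : Multiset ℕ) :
    centralizerCard (j ::ₘ s) = j * (s.count j + 1) * centralizerCard s := by
  have extend : ∏ k ∈ s.toFinset, (s.count k).factorial =
      ∏ k ∈ insert j s.toFinset, (s.count k).factorial :=
    prod_subset (subset_insert _ _) fun k _ hk ↦ by
      rw [Multiset.count_eq_zero_of_notMem (mt Multiset.mem_toFinset.2 hk), Nat.factorial_zero]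
  have off_diag : ∏ k ∈ (insert j s.toFinset).erase j, ((j ::ₘ s).count k).factorial =
      ∏ k ∈ (insert j s.toFinset).erase j, (s.count k).factorial :=
    prod_congr rfl fun k hk ↦ by rw [Multiset.count_cons_of_ne (ne_of_mem_erase hk)]
  have hj : j ∈ insert j s.toFinset := mem_insert_self _ _
  rw [centralizerCard, centralizerCard, extend, Multiset.toFinset_cons, Multiset.prod_cons,
    ← mul_prod_erase _ _ hj, ← mul_prod_erase _ (fun k ↦ (s.count k).factorial) hj, off_diag,
    Multiset.count_cons_self, Nat.factorial_succ]
  ring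

lemma centralizerCard_pos {s : Multiset ℕ} (hs : ∀ i ∈ s, 0 < i) : 0 < centralizerCard s :=
  Nat.mul_pos (Nat.pos_of_ne_zero <| Multiset.prod_ne_zero fun h0 ↦ (hs 0 h0).false)
    (prod_pos fun _ _ ↦ Nat.factorial_pos _)

lemma centralizerCard_add_replicate_one {s : Multiset ℕ} (hs : 1 ∉ s) (c : ℕ) :
    centralizerCard (s + Multiset.replicate c 1) = c.factorial * centralizerCard s := by
  induction c with
  | zero => simp
  | succ c ih =>
    rw [Multiset.replicate_succ, Multiset.add_cons, centralizerCard_cons, ih, Multiset.count_add,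
      Multiset.count_eq_zero_of_notMem hs, Multiset.count_replicate_self, Nat.factorial_succ]
    ring

lemma sum_div_centralizerCard {s : Multiset ℕ} (hs : ∀ i ∈ s, 0 < i) :
    (s.sum : ℝ) / centralizerCard s = ∑ j ∈ s.toFinset, 1 / (centralizerCard (s.erase j) : ℝ) := by
  have sum_eq : (s.sum : ℝ) = ∑ j ∈ s.toFinset, (s.count j * j : ℝ) := by
    exact_mod_cast (by simpa using sum_multiset_count s : s.sum = _)
  rw [sum_eq, sum_div]
  refine sum_congr rfl fun j hj ↦ ?_
  rw [Multiset.mem_toFinset] at hj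
  have card_eq : centralizerCard s = j * s.count j * centralizerCard (s.erase j) := by
    have := centralizerCard_cons j (s.erase j)
    rwa [Multiset.cons_erase hj, Multiset.count_erase_self,
      Nat.sub_add_cancel (Multiset.count_pos.2 hj)] at this
  have hj0 : (j : ℝ) ≠ 0 := by exact_mod_cast (hs j hj).ne'
  have hcount : (s.count j : ℝ) ≠ 0 := by exact_mod_cast (Multiset.count_pos.2 hj).ne'
  have herase : (centralizerCard (s.erase j) : ℝ) ≠ 0 := by
    exact_mod_cast (centralizerCard_pos fun i hi ↦ hs i (Multiset.mem_of_mem_erase hi)).ne'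
  rw [card_eq]
  push_cast
  field_simp

lemma parts_eq_filter_add_replicate {n : ℕ} (l : n.Partition) :
    l.parts = l.parts.filter (2 ≤ ·) +
      Multiset.replicate (n - (l.parts.filter (2 ≤ ·)).sum) 1 := by
  have ones : l.parts.filter (¬2 ≤ ·) =
      Multiset.replicate (l.parts.filter (¬2 ≤ ·)).card 1 :=
    Multiset.eq_replicate_card.2 fun i hi ↦ by
      have := l.parts_pos (Multiset.mem_filter.1 hi).1
      have := (Multiset.mem_filter.1 hi).2
      omega
  have split : l.parts.filter (2 ≤ ·) + l.parts.filter (¬2 ≤ ·) = l.parts :=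
    Multiset.filter_add_not _ _
  have sum_eq : (l.parts.filter (2 ≤ ·)).sum + (l.parts.filter (¬2 ≤ ·)).card = n := by
    have := congrArg Multiset.sum split
    rwa [Multiset.sum_add, congrArg Multiset.sum ones, Multiset.sum_replicate, smul_eq_mul, mul_one,
      l.parts_sum] at this
  rw [show n - (l.parts.filter (2 ≤ ·)).sum = (l.parts.filter (¬2 ≤ ·)).card by omega, ← ones,
    split]

lemma partition_eq_iff_cycleType_eq {α : Type*} [Fintype α] [DecidableEq α]
    {σ : Equiv.Perm α} {l : (Fintype.card α).Partition} :
    σ.partition = l ↔ σ.cycleType = l.parts.filter (2 ≤ ·) := by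
  constructor
  · rintro rfl
    exact Equiv.Perm.filter_parts_partition_eq_cycleType.symm
  · intro h
    rw [Nat.Partition.ext_iff, Equiv.Perm.parts_partition, parts_eq_filter_add_replicate l, ← h,
      Equiv.Perm.sum_cycleType]

lemma card_partition_eq_mul_centralizerCard {α : Type*} [Fintype α] [DecidableEq α]
    (l : (Fintype.card α).Partition) :
    #{σ : Equiv.Perm α | σ.partition = l} * centralizerCard l.parts =
      (Fintype.card α).factorial := by
  have sum_le : (l.parts.filter (2 ≤ ·)).sum ≤ Fintype.card α := by
    conv_rhs => rw [← l.parts_sum, parts_eq_filter_add_replicate l, Multiset.sum_add]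
    exact Nat.le_add_right _ _
  have one_notMem : 1 ∉ l.parts.filter (2 ≤ ·) := by simp
  have card_eq := Equiv.Perm.card_of_cycleType_mul_eq α (l.parts.filter (2 ≤ ·))
  rw [if_pos ⟨sum_le, fun i hi ↦ (Multiset.mem_filter.1 hi).2⟩, mul_assoc (Nat.factorial _)]
    at card_eq
  have centralizer_eq := (congrArg centralizerCard (parts_eq_filter_add_replicate l)).trans
    (centralizerCard_add_replicate_one one_notMem _)
  simp only [partition_eq_iff_cycleType_eq, centralizer_eq]
  exact card_eq

lemma forall_mem_partition_parts_le_iff {α : Type*} [Fintype α] [DecidableEq α] {m : ℕ}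
    (hm : 1 ≤ m) (σ : Equiv.Perm α) :
    (∀ c ∈ σ.partition.parts, c ≤ m) ↔ ∀ c ∈ σ.cycleType, c ≤ m := by
  simp only [Equiv.Perm.parts_partition, Multiset.mem_add]
  refine ⟨fun h c hc ↦ h c (.inl hc), fun h c hc ↦ hc.elim (h c) fun hc ↦ ?_⟩
  exact (Multiset.eq_of_mem_replicate hc).trans_le hm

lemma card_friable_eq_sum_restricted (α : Type*) [Fintype α] [DecidableEq α] {m : ℕ}
    (hm : 1 ≤ m) :
    (Nat.card {σ : Equiv.Perm α // ∀ c ∈ σ.cycleType, c ≤ m} : ℝ) = (Fintype.card α).factorial *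
      ∑ l ∈ restricted (Fintype.card α) (· ≤ m), 1 / (centralizerCard l.parts : ℝ) := by
  have fiberwise : Nat.card {σ : Equiv.Perm α // ∀ c ∈ σ.cycleType, c ≤ m} =
      ∑ l ∈ restricted (Fintype.card α) (· ≤ m), #{σ : Equiv.Perm α | σ.partition = l} := by
    rw [Nat.card_eq_fintype_card, Fintype.card_subtype, card_eq_sum_card_fiberwise
      (f := Equiv.Perm.partition) (t := restricted (Fintype.card α) (· ≤ m))]
    · refine sum_congr rfl fun l hl ↦ congrArg card ?_
      ext σ
      simp only [restricted, mem_filter, mem_univ, true_and] at hl ⊢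
      refine ⟨And.right, fun h ↦ ⟨?_, h⟩⟩
      rwa [← forall_mem_partition_parts_le_iff hm, h]
    · intro σ hσ
      simpa [restricted, forall_mem_partition_parts_le_iff hm] using hσ
  rw [fiberwise, Nat.cast_sum, mul_sum]
  refine sum_congr rfl fun l _ ↦ ?_
  have pos : (centralizerCard l.parts : ℝ) ≠ 0 := by
    exact_mod_cast (centralizerCard_pos fun i hi ↦ l.parts_pos hi).ne'
  rw [mul_one_div, eq_div_iff pos]
  exact_mod_cast card_partition_eq_mul_centralizerCard l

lemma permProb_eq_sum_restricted (n : ℕ) {m : ℕ} (hm : 1 ≤ m) :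
    permProb n m = ∑ l ∈ restricted n (· ≤ m), 1 / (centralizerCard l.parts : ℝ) := by
  rw [permProb, card_friable_eq_sum_restricted _ hm, Fintype.card_fin,
    mul_div_cancel_left₀ _ (Nat.cast_ne_zero.2 n.factorial_ne_zero)]

lemma sum_restricted_parts_erase {n j : ℕ} (hj : 1 ≤ j) (hjn : j ≤ n) {p : ℕ → Prop}
    [DecidablePred p] (hpj : p j) (f : Multiset ℕ → ℝ) :
    ∑ l ∈ restricted n p with j ∈ l.parts, f (l.parts.erase j) =
      ∑ l ∈ restricted (n - j) p, f l.parts := by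
  refine sum_bij' (fun l hl ↦ partitionWithPartEquiv hj hjn ⟨l, (mem_filter.1 hl).2⟩)
    (fun l _ ↦ ((partitionWithPartEquiv hj hjn).symm l).1) ?_ ?_ ?_ ?_ ?_
  · intro l hl
    simp only [restricted, mem_filter, mem_univ, true_and] at hl ⊢
    simpa using fun i hi ↦ hl.1 i (Multiset.mem_of_mem_erase hi)
  · intro l hl
    simp only [restricted, mem_filter, mem_univ, true_and] at hl ⊢
    simpa [hpj] using hl
  all_goals simp

-- Mark an element of `{1, …, n}` and remove the cycle containing it.
lemma mul_permProb {n m : ℕ} (hm : 1 ≤ m) (hmn : m ≤ n) :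
    n * permProb n m = ∑ j ∈ Icc 1 m, permProb (n - j) m := by
  simp only [permProb_eq_sum_restricted _ hm]
  calc (n : ℝ) * ∑ l ∈ restricted n (· ≤ m), 1 / (centralizerCard l.parts : ℝ)
      = ∑ l ∈ restricted n (· ≤ m), ∑ j ∈ l.parts.toFinset,
          1 / (centralizerCard (l.parts.erase j) : ℝ) := by
        rw [mul_sum]
        refine sum_congr rfl fun l _ ↦ ?_
        rw [← sum_div_centralizerCard fun i hi ↦ l.parts_pos hi, l.parts_sum, mul_one_div]
    _ = ∑ j ∈ Icc 1 m, ∑ l ∈ restricted n (· ≤ m) with j ∈ l.parts,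
          1 / (centralizerCard (l.parts.erase j) : ℝ) := by
        refine sum_comm' fun l j ↦ ?_
        simp only [restricted, mem_filter, mem_univ, true_and, Multiset.mem_toFinset, mem_Icc]
        exact ⟨fun ⟨hl, hj⟩ ↦ ⟨⟨hl, hj⟩, l.parts_pos hj, hl j hj⟩, fun h ↦ h.1⟩
    _ = _ := by
        refine sum_congr rfl fun j hj ↦ ?_
        obtain ⟨hj1, hjm⟩ := mem_Icc.1 hj
        exact sum_restricted_parts_erase hj1 (hjm.trans hmn) hjm
          fun s ↦ 1 / (centralizerCard s : ℝ)

lemma permProb_eq_one {n m : ℕ} (hnm : n ≤ m) : permProb n m = 1 := by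
  have friable (σ : Equiv.Perm (Fin n)) : ∀ c ∈ σ.cycleType, c ≤ m := fun c hc ↦
    calc c ≤ σ.cycleType.sum := Multiset.le_sum_of_mem hc
      _ = #σ.support := σ.sum_cycleType
      _ ≤ n := by simpa using card_le_univ σ.support
      _ ≤ m := hnm
  have card_eq : Nat.card {σ : Equiv.Perm (Fin n) // ∀ c ∈ σ.cycleType, c ≤ m} = n.factorial := by
    rw [Nat.card_congr (Equiv.subtypeUnivEquiv friable), Nat.card_perm, Nat.card_fin]
  rw [permProb, card_eq, div_self (Nat.cast_ne_zero.2 n.factorial_ne_zero)]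

lemma le_of_friable_recurrence {m N : ℕ} {f g : ℕ → ℝ} (base : ∀ n ≤ m, f n ≤ g n)
    (hf : ∀ n ∈ Ioc m N, n * f n ≤ ∑ j ∈ Icc 1 m, f (n - j))
    (hg : ∀ n ∈ Ioc m N, ∑ j ∈ Icc 1 m, g (n - j) ≤ n * g n) :
    ∀ n ≤ N, f n ≤ g n := by
  intro n
  induction n using Nat.strong_induction_on with
  | _ n ih =>
    intro hn
    rcases le_or_gt n m with hnm | hnm
    · exact base n hnm
    · have hn' : n ∈ Ioc m N := mem_Ioc.2 ⟨hnm, hn⟩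
      have hn0 : (0 : ℝ) < n := by exact_mod_cast Nat.zero_lt_of_lt hnm
      refine le_of_mul_le_mul_left ((hf n hn').trans (le_trans ?_ (hg n hn'))) hn0
      refine sum_le_sum fun j hj ↦ ?_
      rw [mem_Icc] at hj
      exact ih _ (by omega) (by omega)

end Friable

section Xi

lemma strictMonoOn_exp_sub_one_div :
    StrictMonoOn (fun x : ℝ ↦ (exp x - 1) / x) (Set.Ioi 0) := by
  intro x hx y hy hxy
  simpa using strictConvexOn_exp.secant_strict_mono (Set.mem_univ 0) (Set.mem_univ x)
    (Set.mem_univ y) (ne_of_gt hx) (ne_of_gt hy) hxy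

lemma one_add_mul_two_mul_log_le_exp {u : ℝ} (hu : 0 ≤ u) :
    1 + u * (2 * log (u + 1)) ≤ exp (2 * log (u + 1)) := by
  have log_le : log (u + 1) ≤ (u + 1) / 2 := by
    have := log_le_sub_one_of_pos (show 0 < (u + 1) / 2 by positivity)
    rw [log_div (by positivity) two_ne_zero] at this
    linarith [log_two_lt_d9]
  rw [two_mul (log _), exp_add, exp_log (by positivity)]
  nlinarith

lemma exists_pos_exp_eq_one_add_mul {u : ℝ} (hu : 1 < u) :
    ∃ x, 0 < x ∧ exp x = 1 + u * x := by
  have hu0 : 0 < u := by positivity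
  have log_u_pos : 0 < log u := log_pos hu
  have low : exp (log u) - u * log u ≤ 1 := by
    have := one_sub_inv_le_log_of_pos hu0
    rw [exp_log hu0]
    have := mul_le_mul_of_nonneg_left this hu0.le
    rw [mul_sub, mul_inv_cancel₀ hu0.ne'] at this
    linarith
  have high : 1 ≤ exp (2 * log (u + 1)) - u * (2 * log (u + 1)) :=
    le_sub_iff_add_le.2 (one_add_mul_two_mul_log_le_exp hu0.le)
  have le : log u ≤ 2 * log (u + 1) := by
    have := log_le_log hu0 (show u ≤ u + 1 by linarith)
    linarith
  obtain ⟨x, hx, hxu⟩ := intermediate_value_Icc le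
    (f := fun x ↦ exp x - u * x) (by fun_prop) ⟨low, high⟩
  exact ⟨x, log_u_pos.trans_le hx.1, sub_eq_iff_eq_add.1 hxu⟩

lemma xi_spec {u : ℝ} (hu : 1 < u) : 0 < xi u ∧ exp (xi u) = 1 + u * xi u := by
  have h := exists_pos_exp_eq_one_add_mul hu
  rw [xi, dif_pos h]
  exact h.choose_spec

lemma xi_of_le_one {u : ℝ} (hu : u ≤ 1) : xi u = 0 := by
  refine dif_neg fun ⟨x, hx, hxu⟩ ↦ ?_
  have := add_one_lt_exp hx.ne'
  nlinarith

lemma xi_nonneg (u : ℝ) : 0 ≤ xi u :=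
  (le_or_gt u 1).elim (fun hu ↦ (xi_of_le_one hu).ge) fun hu ↦ (xi_spec hu).1.le

lemma xi_le_iff {u x : ℝ} (hu : 1 < u) (hx : 0 < x) : xi u ≤ x ↔ 1 + u * x ≤ exp x := by
  obtain ⟨xi_pos, exp_xi⟩ := xi_spec hu
  rw [← strictMonoOn_exp_sub_one_div.le_iff_le xi_pos hx, exp_xi, add_sub_cancel_left,
    mul_div_cancel_right₀ _ xi_pos.ne', le_div_iff₀ hx, le_sub_iff_add_le']

lemma le_xi_iff {u x : ℝ} (hu : 1 < u) (hx : 0 < x) : x ≤ xi u ↔ exp x ≤ 1 + u * x := by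
  obtain ⟨xi_pos, exp_xi⟩ := xi_spec hu
  rw [← strictMonoOn_exp_sub_one_div.le_iff_le hx xi_pos, exp_xi, add_sub_cancel_left,
    mul_div_cancel_right₀ _ xi_pos.ne', div_le_iff₀ hx, sub_le_iff_le_add']

lemma xi_le_two_mul_log {u : ℝ} (hu : 0 ≤ u) : xi u ≤ 2 * log (u + 1) := by
  rcases le_or_gt u 1 with hu1 | hu1
  · rw [xi_of_le_one hu1]
    exact mul_nonneg zero_le_two (log_nonneg (by linarith))
  · exact (xi_le_iff hu1 (mul_pos two_pos (log_pos (by linarith)))).2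
      (one_add_mul_two_mul_log_le_exp hu)

lemma two_le_xi {v : ℝ} (hv : 4 ≤ v) : 2 ≤ xi v := by
  rw [le_xi_iff (by linarith) two_pos, show (2 : ℝ) = 1 + 1 by norm_num, exp_add]
  nlinarith [exp_one_lt_d9, exp_pos 1]

lemma xi_sub_xi_le {u v : ℝ} (hv : 4 ≤ v) (hvu : v ≤ u) : xi u - xi v ≤ 2 * log (u / v) := by
  obtain ⟨xi_v_pos, exp_xi_v⟩ := xi_spec (show 1 < v by linarith)
  obtain ⟨xi_u_pos, exp_xi_u⟩ := xi_spec (show 1 < u by linarith)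
  have hv0 : 0 < v := by linarith
  have hu0 : 0 < u := by linarith
  have log_div_nonneg : 0 ≤ log (u / v) := log_nonneg ((one_le_div hv0).2 hvu)
  rcases le_total (xi u) (xi v) with hle | hle
  · linarith
  have exp_le : exp (xi u - xi v) ≤ u / v * (xi u / xi v) := by
    have : v * xi v ≤ u * xi u := by gcongr
    rw [exp_sub, exp_xi_u, exp_xi_v, div_mul_div_comm,
      div_le_div_iff₀ (by positivity) (by positivity)]
    linarith
  have log_xi_div : log (xi u / xi v) ≤ (xi u - xi v) / 2 :=
    calc log (xi u / xi v) ≤ xi u / xi v - 1 := log_le_sub_one_of_pos (by positivity)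
      _ = (xi u - xi v) / xi v := by rw [sub_div, div_self xi_v_pos.ne']
      _ ≤ (xi u - xi v) / 2 :=
        div_le_div_of_nonneg_left (sub_nonneg.2 hle) two_pos (two_le_xi hv)
  have := (le_log_iff_exp_le (by positivity)).2 exp_le
  rw [log_mul (by positivity) (by positivity)] at this
  linarith

end Xi

/-- The Dickman function extended to the whole line by the value `1`, so that the arguments
`t - 1` of its delay equation need no side conditions. -/
structure IsExtendedDickman (ρ : ℝ → ℝ) : Prop where
  continuous : Continuous ρ
  pos : ∀ t, 0 < ρ t
  eq_one : ∀ t ≤ 1, ρ t = 1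
  hasDerivAt_of_one_lt : ∀ t, 1 < t → HasDerivAt ρ (-(ρ (t - 1)) / t) t

lemma IsDickman.extend {ρ : ℝ → ℝ} (hρ : IsDickman ρ) :
    IsExtendedDickman fun t ↦ ρ (max t 0) := by
  obtain ⟨cont, pos, one, deriv⟩ := hρ
  refine ⟨cont.comp_continuous (by fun_prop) fun t ↦ le_max_right t 0,
    fun t ↦ pos _ (le_max_right t 0),
    fun t ht ↦ one _ ⟨le_max_right t 0, max_le ht zero_le_one⟩, fun t ht ↦ ?_⟩
  rw [max_eq_left (sub_nonneg.2 ht.le)]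
  refine (deriv t ht).congr_of_eventuallyEq ?_
  filter_upwards [lt_mem_nhds (zero_lt_one.trans ht)] with s hs
  rw [max_eq_left hs.le]

/-- The decay rate `-ρ'/ρ` of the Dickman function, in the closed form given by the delay equation;
at the corner `u = 1` of `ρ` it is the right derivative. -/
noncomputable def decayRate (ρ : ℝ → ℝ) (u : ℝ) : ℝ :=
  if u < 1 then 0 else ρ (u - 1) / (u * ρ u)

lemma decayRate_of_lt {ρ : ℝ → ℝ} {u : ℝ} (hu : u < 1) : decayRate ρ u = 0 := if_pos hu

lemma decayRate_of_le {ρ : ℝ → ℝ} {u : ℝ} (hu : 1 ≤ u) :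
    decayRate ρ u = ρ (u - 1) / (u * ρ u) := if_neg hu.not_gt

lemma mul_sub_le_integral_of_monotoneOn {f : ℝ → ℝ} {x y : ℝ} (hf : MonotoneOn f (Set.uIcc x y)) :
    f x * (y - x) ≤ ∫ t in x..y, f t := by
  rcases le_total x y with hxy | hxy
  · rw [mul_comm, ← smul_eq_mul, ← intervalIntegral.integral_const]
    refine intervalIntegral.integral_mono_on hxy (by simp) hf.intervalIntegrable fun t ht ↦ ?_
    rw [Set.uIcc_of_le hxy] at hf
    exact hf (Set.left_mem_Icc.2 hxy) ht ht.1
  · rw [intervalIntegral.integral_symm, ← neg_sub x y, mul_neg, neg_le_neg_iff, mul_comm,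
      ← smul_eq_mul, ← intervalIntegral.integral_const]
    refine intervalIntegral.integral_mono_on hxy hf.intervalIntegrable.symm (by simp) fun t ht ↦ ?_
    rw [Set.uIcc_of_ge hxy] at hf
    exact hf ht (Set.right_mem_Icc.2 hxy) ht.2

lemma integral_exp_mul_sub {c : ℝ} (hc : c ≠ 0) (u : ℝ) :
    ∫ t in (u - 1)..u, exp (c * (u - t)) = (exp c - 1) / c := by
  rw [intervalIntegral.integral_comp_sub_left (fun t ↦ exp (c * t)) u,
    intervalIntegral.integral_comp_mul_left _ hc]
  simp [integral_exp, div_eq_inv_mul]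

namespace IsExtendedDickman

variable {ρ : ℝ → ℝ} (hρ : IsExtendedDickman ρ) {u x y : ℝ}

include hρ

lemma decayRate_pos (hu : 1 ≤ u) : 0 < decayRate ρ u := by
  have := hρ.pos u
  have := hρ.pos (u - 1)
  rw [decayRate_of_le hu]
  positivity

lemma decayRate_mul (hu : 1 ≤ u) : decayRate ρ u * ρ u = ρ (u - 1) / u := by
  have := hρ.pos u
  have : u ≠ 0 := by positivity
  rw [decayRate_of_le hu]
  field_simp

lemma hasDerivAt {t : ℝ} (ht : t ≠ 1) : HasDerivAt ρ (-(decayRate ρ t * ρ t)) t := by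
  rcases ht.lt_or_gt with ht | ht
  · rw [decayRate_of_lt ht, zero_mul, neg_zero]
    refine (hasDerivAt_const t 1).congr_of_eventuallyEq ?_
    filter_upwards [gt_mem_nhds ht] with s hs using hρ.eq_one s hs.le
  · rw [hρ.decayRate_mul ht.le, ← neg_div]
    exact hρ.hasDerivAt_of_one_lt t ht

lemma strictAntiOn : StrictAntiOn ρ (Set.Ici 1) := by
  refine strictAntiOn_of_hasDerivWithinAt_neg (convex_Ici 1) hρ.continuous.continuousOn
    (f' := fun t ↦ -(decayRate ρ t * ρ t)) ?_ ?_ <;> rw [interior_Ici]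
  · exact fun t ht ↦ (hρ.hasDerivAt (ne_of_gt ht)).hasDerivWithinAt
  · exact fun t ht ↦ neg_neg_of_pos (mul_pos (hρ.decayRate_pos (le_of_lt ht)) (hρ.pos t))

lemma antitone : Antitone ρ := by
  intro x y hxy
  have eq_max (t : ℝ) : ρ t = ρ (max t 1) := by
    rcases le_total t 1 with ht | ht
    · rw [max_eq_right ht, hρ.eq_one t ht, hρ.eq_one 1 le_rfl]
    · rw [max_eq_left ht]
  rw [eq_max x, eq_max y]
  exact hρ.strictAntiOn.antitoneOn (le_max_right x 1) (le_max_right y 1) (max_le_max_right 1 hxy)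

lemma le_one (t : ℝ) : ρ t ≤ 1 :=
  (hρ.antitone (min_le_left t 1)).trans_eq (hρ.eq_one _ (min_le_right t 1))

lemma integral_sub_one (hu : 1 ≤ u) : ∫ t in (u - 1)..u, ρ t = u * ρ u := by
  have int (a b : ℝ) : IntervalIntegrable ρ MeasureTheory.volume a b :=
    hρ.continuous.intervalIntegrable a b
  have deriv : ∀ t ∈ Set.Ioo 1 u, HasDerivAt (fun t ↦ t * ρ t) (ρ t - ρ (t - 1)) t :=
    fun t ht ↦ by
      have : t ≠ 0 := by linarith [ht.1]
      refine ((hasDerivAt_id t).mul (hρ.hasDerivAt_of_one_lt t ht.1)).congr_deriv ?_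
      rw [id, mul_div_cancel₀ _ this, one_mul, ← sub_eq_add_neg]
  have shift : IntervalIntegrable (fun t ↦ ρ (t - 1)) MeasureTheory.volume 1 u :=
    (hρ.continuous.comp (by fun_prop)).intervalIntegrable 1 u
  have ftc := intervalIntegral.integral_eq_sub_of_hasDerivAt_of_le hu
    (by have := hρ.continuous; fun_prop) deriv ((int 1 u).sub shift)
  have unit : ∫ t in (0 : ℝ)..1, ρ t = 1 := by
    rw [intervalIntegral.integral_congr (g := fun _ ↦ 1), intervalIntegral.integral_const]
    · simp
    · intro t ht
      rw [Set.uIcc_of_le zero_le_one] at ht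
      exact hρ.eq_one t ht.2
  rw [intervalIntegral.integral_sub (int 1 u) shift, intervalIntegral.integral_comp_sub_right ρ 1,
    sub_self, intervalIntegral.integral_interval_sub_interval_comm (int 1 u) (int 0 (u - 1))
      (int 1 0), intervalIntegral.integral_symm 0 1, unit, hρ.eq_one 1 le_rfl] at ftc
  rw [intervalIntegral.integral_symm u (u - 1)]
  linarith

lemma continuousOn_decayRate : ContinuousOn (decayRate ρ) (Set.Ici 1) := by
  have cont := hρ.continuous
  refine ContinuousOn.congr (f := fun u ↦ ρ (u - 1) / (u * ρ u)) ?_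
    fun u hu ↦ decayRate_of_le hu
  exact (by fun_prop : Continuous fun u ↦ ρ (u - 1)).continuousOn.div (by fun_prop)
    fun u hu ↦ (mul_pos (zero_lt_one.trans_le hu) (hρ.pos u)).ne'

lemma hasDerivAt_decayRate (hu : 1 < u) (hu2 : u ≠ 2) :
    HasDerivAt (decayRate ρ)
      (decayRate ρ u * (decayRate ρ u - decayRate ρ (u - 1) - 1 / u)) u := by
  have hu0 : u ≠ 0 := by positivity
  have hρu := (hρ.pos u).ne'
  have num : HasDerivAt (fun t ↦ ρ (t - 1)) (-(decayRate ρ (u - 1) * ρ (u - 1))) u :=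
    (hρ.hasDerivAt fun h ↦ hu2 (by linarith)).comp_sub_const u 1
  have den : HasDerivAt (fun t ↦ t * ρ t) (1 * ρ u + u * -(decayRate ρ u * ρ u)) u :=
    (hasDerivAt_id u).mul (hρ.hasDerivAt hu.ne')
  refine ((num.div den (mul_ne_zero hu0 hρu)).congr_deriv ?_).congr_of_eventuallyEq ?_
  · rw [decayRate_of_le hu.le]
    field_simp
    ring
  · filter_upwards [lt_mem_nhds hu] with t ht using decayRate_of_le ht.le

lemma integral_decayRate_mul (hu : 2 ≤ u) :
    ∫ t in (u - 1)..u, decayRate ρ t * ρ t = ρ (u - 1) - ρ u := by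
  have cont : ContinuousOn (fun t ↦ -(decayRate ρ t * ρ t)) (Set.uIcc (u - 1) u) := by
    rw [Set.uIcc_of_le (by linarith)]
    exact ((hρ.continuousOn_decayRate.mul hρ.continuous.continuousOn).mono
      fun t ht ↦ Set.mem_Ici.2 (by linarith [ht.1])).neg
  have := intervalIntegral.integral_eq_sub_of_hasDerivAt_of_le (sub_one_lt u).le
    hρ.continuous.continuousOn (fun t ht ↦ hρ.hasDerivAt (by linarith [ht.1] : 1 < t).ne')
    cont.intervalIntegrable
  rw [intervalIntegral.integral_neg] at this
  linarith

-- Up to the factor `u * ρ u`, the claim compares the `ρ`-weighted mean of the rate on `[u - 1, u]`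
-- with its value at the left end.
lemma decayRate_gap_pos_of_strictMonoOn (hu : 2 ≤ u)
    (mono : StrictMonoOn (decayRate ρ) (Set.Icc 1 u)) :
    0 < decayRate ρ u - decayRate ρ (u - 1) - 1 / u := by
  have subset : Set.Icc (u - 1) u ⊆ Set.Ici 1 := fun t ht ↦ Set.mem_Ici.2 (by linarith [ht.1])
  have left_mem : u - 1 ∈ Set.Icc 1 u := ⟨by linarith, by linarith⟩
  have right_mem : u ∈ Set.Icc 1 u := ⟨by linarith, le_rfl⟩
  have mean_lt : ∫ t in (u - 1)..u, decayRate ρ (u - 1) * ρ t <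
      ∫ t in (u - 1)..u, decayRate ρ t * ρ t := by
    refine intervalIntegral.integral_lt_integral_of_continuousOn_of_le_of_exists_lt (by linarith)
      (by have := hρ.continuous; fun_prop)
      ((hρ.continuousOn_decayRate.mul hρ.continuous.continuousOn).mono subset)
      (fun t ht ↦ ?_) ⟨u, ⟨by linarith, le_rfl⟩, ?_⟩
    · have := mono.monotoneOn left_mem ⟨by linarith [ht.1], ht.2⟩ ht.1.le
      exact mul_le_mul_of_nonneg_right this (hρ.pos t).le
    · exact mul_lt_mul_of_pos_right (mono left_mem right_mem (sub_one_lt u)) (hρ.pos u)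
  rw [intervalIntegral.integral_const_mul, hρ.integral_sub_one (by linarith),
    hρ.integral_decayRate_mul hu] at mean_lt
  have := hρ.pos u
  rw [decayRate_of_le (by linarith : 1 ≤ u),
    show ρ (u - 1) / (u * ρ u) - decayRate ρ (u - 1) - 1 / u =
      (ρ (u - 1) - ρ u - decayRate ρ (u - 1) * (u * ρ u)) / (u * ρ u) by
        field_simp; ring]
  exact div_pos (by linarith) (by positivity)

lemma decayRate_gap_pos_of_lt_two (hu : 1 < u) (hu2 : u < 2) :
    0 < decayRate ρ u - decayRate ρ (u - 1) - 1 / u := by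
  have lt_one : ρ u < 1 := (hρ.strictAntiOn Set.self_mem_Ici hu.le hu).trans_eq (hρ.eq_one 1 le_rfl)
  rw [decayRate_of_lt (by linarith : u - 1 < 1), decayRate_of_le hu.le, sub_zero, sub_pos,
    hρ.eq_one (u - 1) (by linarith)]
  have := hρ.pos u
  exact one_div_lt_one_div_of_lt (by positivity) (mul_lt_of_lt_one_right (by positivity) lt_one)

lemma strictMonoOn_decayRate_of_gap_pos (hu : 2 ≤ u)
    (gap : ∀ t ∈ Set.Ioo 2 u, 0 < decayRate ρ t - decayRate ρ (t - 1) - 1 / t) :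
    StrictMonoOn (decayRate ρ) (Set.Icc 1 u) := by
  have mono {a b : ℝ} (ha : 1 ≤ a) (pos : ∀ t ∈ Set.Ioo a b,
      t ≠ 2 ∧ 0 < decayRate ρ t - decayRate ρ (t - 1) - 1 / t) :
      StrictMonoOn (decayRate ρ) (Set.Icc a b) := by
    refine strictMonoOn_of_hasDerivWithinAt_pos (convex_Icc a b)
      (f' := fun t ↦ decayRate ρ t * (decayRate ρ t - decayRate ρ (t - 1) - 1 / t))
      (hρ.continuousOn_decayRate.mono fun t ht ↦ ha.trans ht.1) ?_ ?_ <;> rw [interior_Icc]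
    · exact fun t ht ↦
        (hρ.hasDerivAt_decayRate (ha.trans_lt ht.1) (pos t ht).1).hasDerivWithinAt
    · exact fun t ht ↦ mul_pos (hρ.decayRate_pos (ha.trans ht.1.le)) (pos t ht).2
  have left : StrictMonoOn (decayRate ρ) (Set.Icc 1 2) :=
    mono le_rfl fun t ht ↦ ⟨ht.2.ne, hρ.decayRate_gap_pos_of_lt_two ht.1 ht.2⟩
  have right : StrictMonoOn (decayRate ρ) (Set.Icc 2 u) :=
    mono one_le_two fun t ht ↦ ⟨ht.1.ne', gap t ht⟩
  rw [← Set.Icc_union_Icc_eq_Icc one_le_two hu]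
  exact left.union right (isGreatest_Icc one_le_two) (isLeast_Icc hu)

lemma decayRate_gap_pos (hu : 2 ≤ u) : 0 < decayRate ρ u - decayRate ρ (u - 1) - 1 / u := by
  by_contra! hle
  let failures := Set.Ici 2 ∩ {t : ℝ | decayRate ρ t - decayRate ρ (t - 1) - 1 / t ≤ 0}
  have cont : ContinuousOn (fun t ↦ decayRate ρ t - decayRate ρ (t - 1) - 1 / t) (Set.Ici 2) :=
    ((hρ.continuousOn_decayRate.mono (Set.Ici_subset_Ici.2 one_le_two)).sub
      (hρ.continuousOn_decayRate.comp (by fun_prop) fun t (ht : 2 ≤ t) ↦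
        Set.mem_Ici.2 (by linarith))).sub
      (continuousOn_const.div continuousOn_id fun t ht ↦ (two_pos.trans_le ht).ne')
  have closed : IsClosed failures := cont.preimage_isClosed_of_isClosed isClosed_Ici isClosed_Iic
  have bdd : BddBelow failures := ⟨2, fun t ht ↦ ht.1⟩
  obtain ⟨two_le, first⟩ : sInf failures ∈ failures := closed.csInf_mem ⟨u, hu, hle⟩ bdd
  refine first.not_gt (hρ.decayRate_gap_pos_of_strictMonoOn two_le
    (hρ.strictMonoOn_decayRate_of_gap_pos two_le fun t ht ↦ ?_))
  by_contra! htle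
  exact (csInf_le bdd ⟨ht.1.le, htle⟩).not_gt ht.2

lemma monotone_decayRate : Monotone (decayRate ρ) := by
  intro x y hxy
  rcases lt_or_ge x 1 with hx | hx
  · rw [decayRate_of_lt hx]
    rcases lt_or_ge y 1 with hy | hy
    · rw [decayRate_of_lt hy]
    · exact (hρ.decayRate_pos hy).le
  · exact (hρ.strictMonoOn_decayRate_of_gap_pos (le_max_right y 2)
      fun t ht ↦ hρ.decayRate_gap_pos ht.1.le).monotoneOn ⟨hx, hxy.trans (le_max_left y 2)⟩
      ⟨hx.trans hxy, le_max_left y 2⟩ hxy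

lemma decayRate_nonneg (u : ℝ) : 0 ≤ decayRate ρ u :=
  (decayRate_of_lt (min_lt_of_right_lt one_half_lt_one)).ge.trans
    (hρ.monotone_decayRate (min_le_left u (1 / 2)))

lemma integral_decayRate (x y : ℝ) : ∫ t in x..y, decayRate ρ t = log (ρ x) - log (ρ y) := by
  have ftc := MeasureTheory.integral_eq_of_hasDerivAt_off_countable (a := x) (b := y)
    (fun t ↦ -log (ρ t)) (decayRate ρ) (Set.countable_singleton 1)
    (hρ.continuous.log fun t ↦ (hρ.pos t).ne').neg.continuousOn (fun t ht ↦ ?_)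
    hρ.monotone_decayRate.intervalIntegrable
  · rw [ftc]
    ring
  · have := ((hρ.hasDerivAt ht.2).log (hρ.pos t).ne').neg
    rwa [neg_div, neg_neg, mul_div_cancel_right₀ _ (hρ.pos t).ne'] at this

lemma log_le_log_sub_decayRate_mul (x y : ℝ) :
    log (ρ y) ≤ log (ρ x) - decayRate ρ x * (y - x) := by
  have := mul_sub_le_integral_of_monotoneOn (hρ.monotone_decayRate.monotoneOn (Set.uIcc x y))
  rw [hρ.integral_decayRate] at this
  linarith

lemma le_mul_exp_neg_decayRate_mul (x y : ℝ) :
    ρ y ≤ ρ x * exp (-(decayRate ρ x * (y - x))) := by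
  rw [← exp_log (hρ.pos y), ← log_le_log_iff (exp_pos _) (mul_pos (hρ.pos x) (exp_pos _)),
    log_exp, log_mul (hρ.pos x).ne' (exp_pos _).ne', log_exp, ← sub_eq_add_neg]
  exact hρ.log_le_log_sub_decayRate_mul x y

lemma sub_mul_sub_le (hx : 1 ≤ x) (hy : 1 ≤ y) : ρ x - ρ (x - 1) / x * (y - x) ≤ ρ y := by
  have subset : Set.uIcc x y ⊆ Set.Ici 1 := Set.ordConnected_Ici.uIcc_subset hx hy
  have mono : MonotoneOn (fun t ↦ -(ρ (t - 1) / t)) (Set.uIcc x y) := fun s hs t _ hst ↦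
    neg_le_neg <| div_le_div₀ (hρ.pos _).le (hρ.antitone (by linarith))
      (zero_lt_one.trans_le (subset hs)) hst
  have ftc : ∫ t in x..y, -(ρ (t - 1) / t) = ρ y - ρ x := by
    refine MeasureTheory.integral_eq_of_hasDerivAt_off_countable ρ _ (Set.countable_singleton 1)
      hρ.continuous.continuousOn (fun t ht ↦ ?_) mono.intervalIntegrable
    rw [← neg_div]
    refine hρ.hasDerivAt_of_one_lt t (lt_of_le_of_ne ?_ (Ne.symm ht.2))
    exact subset (Set.Ioo_subset_Icc_self ht.1)
  have := mul_sub_le_integral_of_monotoneOn mono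
  rw [ftc] at this
  linarith

lemma concaveOn_log : ConcaveOn ℝ Set.univ fun t ↦ log (ρ t) := by
  refine ⟨convex_univ, fun x _ y _ a b ha hb hab ↦ ?_⟩
  have tangent_x := hρ.log_le_log_sub_decayRate_mul (a * x + b * y) x
  have tangent_y := hρ.log_le_log_sub_decayRate_mul (a * x + b * y) y
  obtain rfl : b = 1 - a := by linarith
  simp only [smul_eq_mul]
  linear_combination a * tangent_x + (1 - a) * tangent_y

lemma one_add_mul_decayRate_le_exp (hu : 1 ≤ u) : 1 + u * decayRate ρ u ≤ exp (decayRate ρ u) := by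
  have rate_pos := hρ.decayRate_pos hu
  have hρu := hρ.pos u
  have : u * ρ u ≤ ρ u * ((exp (decayRate ρ u) - 1) / decayRate ρ u) := by
    rw [← hρ.integral_sub_one hu, ← integral_exp_mul_sub rate_pos.ne',
      ← intervalIntegral.integral_const_mul]
    refine intervalIntegral.integral_mono_on (by linarith) (hρ.continuous.intervalIntegrable _ _)
      (Continuous.intervalIntegrable (by fun_prop) _ _) fun t _ ↦ ?_
    convert hρ.le_mul_exp_neg_decayRate_mul u t using 3
    ring
  rw [mul_comm u, mul_le_mul_iff_right₀ hρu, le_div_iff₀ rate_pos] at this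
  linarith

lemma xi_le_decayRate (hu : 1 < u) : xi u ≤ decayRate ρ u :=
  (xi_le_iff hu (hρ.decayRate_pos hu.le)).2 (hρ.one_add_mul_decayRate_le_exp hu.le)

-- Log-concavity puts `ρ` above its log-linear interpolation between `u - 1` and `u`.
lemma exp_log_sub_log_le (hu : 1 ≤ u) :
    exp (log (ρ (u - 1)) - log (ρ u)) ≤ 1 + u * (log (ρ (u - 1)) - log (ρ u)) := by
  set s := log (ρ (u - 1)) - log (ρ u) with hs
  have s_nonneg : 0 ≤ s := sub_nonneg.2 (log_le_log (hρ.pos u) (hρ.antitone (by linarith)))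
  rcases s_nonneg.eq_or_lt with hs0 | s_pos
  · simp [← hs0]
  have hρu := hρ.pos u
  have chord : ∀ t ∈ Set.Icc (u - 1) u, ρ u * exp (s * (u - t)) ≤ ρ t := fun t ht ↦ by
    have concave := hρ.concaveOn_log.2 (Set.mem_univ (u - 1)) (Set.mem_univ u)
      (sub_nonneg.2 ht.2) (by linarith [ht.1] : 0 ≤ 1 - (u - t)) (by ring)
    rw [smul_eq_mul, smul_eq_mul, smul_eq_mul, smul_eq_mul,
      show (u - t) * (u - 1) + (1 - (u - t)) * u = t by ring] at concave
    rw [← log_le_log_iff (by positivity) (hρ.pos t), log_mul hρu.ne' (exp_pos _).ne', log_exp, hs]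
    linarith
  have : ρ u * ((exp s - 1) / s) ≤ u * ρ u := by
    rw [← hρ.integral_sub_one hu, ← integral_exp_mul_sub s_pos.ne',
      ← intervalIntegral.integral_const_mul]
    exact intervalIntegral.integral_mono_on (by linarith)
      (Continuous.intervalIntegrable (by fun_prop) _ _) (hρ.continuous.intervalIntegrable _ _) chord
  rw [mul_comm u, mul_le_mul_iff_right₀ hρu, div_le_iff₀ s_pos] at this
  linarith

lemma log_sub_log_le_xi (hu : 1 ≤ u) : log (ρ (u - 1)) - log (ρ u) ≤ xi u := by
  rcases le_or_gt (log (ρ (u - 1)) - log (ρ u)) 0 with hs | hs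
  · exact hs.trans (xi_nonneg u)
  have one_lt : 1 < u := hu.lt_of_ne fun h ↦ by
    simp [← h, hρ.eq_one 0 zero_le_one, hρ.eq_one 1 le_rfl] at hs
  exact (le_xi_iff one_lt hs).2 (hρ.exp_log_sub_log_le hu)

lemma decayRate_le_xi_add (hu : 1 ≤ u) : decayRate ρ u ≤ xi u + 1 / u := by
  have hu0 : 0 < u := by positivity
  have mul_rate : u * decayRate ρ u = exp (log (ρ (u - 1)) - log (ρ u)) := by
    have := (hρ.pos u).ne'
    rw [exp_sub, exp_log (hρ.pos _), exp_log (hρ.pos _), decayRate_of_le hu]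
    field_simp
  refine le_of_mul_le_mul_left ?_ hu0
  calc u * decayRate ρ u ≤ 1 + u * (log (ρ (u - 1)) - log (ρ u)) :=
        mul_rate.trans_le (hρ.exp_log_sub_log_le hu)
    _ ≤ 1 + u * xi u := by gcongr; exact hρ.log_sub_log_le_xi hu
    _ = u * (xi u + 1 / u) := by field_simp; ring

end IsExtendedDickman

section Cells

open Finset

lemma sum_integral_cells {f : ℝ → ℝ} (hf : Continuous f) (x : ℝ) (m : ℕ) :
    ∑ j ∈ Icc 1 m, ∫ y in (x - j - 1 / 2)..(x - j + 1 / 2), f y =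
      ∫ y in (x - m - 1 / 2)..(x - 1 / 2), f y := by
  induction m with
  | zero => simp
  | succ m ih =>
    rw [sum_Icc_succ_top (by omega), ih, add_comm,
      show x - ((m + 1 : ℕ) : ℝ) + 1 / 2 = x - m - 1 / 2 by push_cast; ring]
    exact intervalIntegral.integral_add_adjacent_intervals (hf.intervalIntegrable _ _)
      (hf.intervalIntegrable _ _)

lemma integral_affine_cell (k a c : ℝ) :
    ∫ y in (k - 1 / 2)..(k + 1 / 2), (a + c * (y - k)) = a := by
  rw [intervalIntegral.integral_comp_sub_right (fun y ↦ a + c * y) k,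
    intervalIntegral.integral_add (by simp) (Continuous.intervalIntegrable (by fun_prop) _ _),
    intervalIntegral.integral_const_mul, intervalIntegral.integral_const, integral_id, smul_eq_mul]
  ring

lemma integral_exp_cell_le {c : ℝ} (hc : |c| ≤ 2) (k : ℝ) :
    ∫ y in (k - 1 / 2)..(k + 1 / 2), exp (-(c * (y - k))) ≤ 1 + c ^ 2 / 4 := by
  rw [← integral_affine_cell k (1 + c ^ 2 / 4) (-c)]
  refine intervalIntegral.integral_mono_on (by linarith)
    (Continuous.intervalIntegrable (by fun_prop) _ _)
    (Continuous.intervalIntegrable (by fun_prop) _ _) fun y hy ↦ ?_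
  have hyk : |y - k| ≤ 1 / 2 := abs_le.2 ⟨by linarith [hy.1], by linarith [hy.2]⟩
  have abs_le_one : |-(c * (y - k))| ≤ 1 := by
    rw [abs_neg, abs_mul]
    nlinarith [abs_nonneg c]
  have quadratic := (abs_le.1 (abs_exp_sub_one_sub_id_le abs_le_one)).2
  have sq_le : (y - k) ^ 2 ≤ 1 / 4 := by
    rw [← sq_abs]
    nlinarith [abs_nonneg (y - k)]
  nlinarith [mul_le_mul_of_nonneg_left sq_le (sq_nonneg c)]

-- Chebyshev's sum inequality: both `j ↦ j` and `w` increase.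
lemma half_mul_sum_le_sum_mul {w : ℕ → ℝ} (mono : Monotone w) (nonneg : ∀ j, 0 ≤ w j) (m : ℕ) :
    (m : ℝ) / 2 * ∑ j ∈ Icc 1 m, w j ≤ ∑ j ∈ Icc 1 m, j * w j := by
  have half_sq_le_sum (m : ℕ) : (m : ℝ) * m / 2 ≤ ∑ j ∈ Icc 1 m, (j : ℝ) := by
    induction m with
    | zero => simp
    | succ m ih =>
      rw [sum_Icc_succ_top (by omega)]
      push_cast
      linarith
  rcases m.eq_zero_or_pos with rfl | hm
  · simp
  have chebyshev := ((Nat.mono_cast (α := ℝ)).monovary mono).monovaryOn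
    (Icc 1 m : Finset ℕ) |>.sum_mul_sum_le_card_mul_sum
  rw [Nat.card_Icc, Nat.add_sub_cancel] at chebyshev
  refine le_of_mul_le_mul_left (le_trans ?_ chebyshev) (Nat.cast_pos.2 hm)
  rw [← mul_assoc, ← mul_div_assoc]
  exact mul_le_mul_of_nonneg_right (half_sq_le_sum m) (sum_nonneg fun j _ ↦ nonneg j)

lemma one_add_mul_sum_le_sum_mul_exp {w : ℕ → ℝ} (mono : Monotone w) (nonneg : ∀ j, 0 ≤ w j)
    {t : ℝ} (ht : 0 ≤ t) (m : ℕ) :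
    (1 + t * m / 2) * ∑ j ∈ Icc 1 m, w j ≤ ∑ j ∈ Icc 1 m, w j * exp (t * j) :=
  calc (1 + t * m / 2) * ∑ j ∈ Icc 1 m, w j
      = ∑ j ∈ Icc 1 m, w j + t * (m / 2 * ∑ j ∈ Icc 1 m, w j) := by ring
    _ ≤ ∑ j ∈ Icc 1 m, w j + t * ∑ j ∈ Icc 1 m, j * w j := by
      gcongr
      exact half_mul_sum_le_sum_mul mono nonneg m
    _ = ∑ j ∈ Icc 1 m, w j * (t * j + 1) := by
      rw [mul_sum, ← sum_add_distrib]
      exact sum_congr rfl fun j _ ↦ by ring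
    _ ≤ ∑ j ∈ Icc 1 m, w j * exp (t * j) := by
      gcongr with j _
      · exact nonneg j
      · exact add_one_le_exp _

end Cells

namespace IsExtendedDickman

open Finset

variable {ρ : ℝ → ℝ} (hρ : IsExtendedDickman ρ) {L k x q : ℝ} {n m : ℕ}

include hρ

lemma continuous_comp_div (L : ℝ) : Continuous fun y ↦ ρ (y / L) :=
  hρ.continuous.comp (continuous_id.div_const L)

lemma integral_comp_div (hL : 0 < L) (hx : L ≤ x) :
    ∫ y in (x - L)..x, ρ (y / L) = x * ρ (x / L) := by
  rw [intervalIntegral.integral_comp_div ρ hL.ne', sub_div, div_self hL.ne',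
    hρ.integral_sub_one ((one_le_div hL).2 hx), smul_eq_mul, ← mul_assoc, mul_div_cancel₀ _ hL.ne']

lemma mul_eq_sum_integral_cells (hx : m + 1 / 2 ≤ x) :
    x * ρ (x / (m + 1 / 2)) =
      ∑ j ∈ Icc 1 m, (∫ y in (x - j - 1 / 2)..(x - j + 1 / 2), ρ (y / (m + 1 / 2))) +
        ∫ y in (x - 1 / 2)..x, ρ (y / (m + 1 / 2)) := by
  have cont := hρ.continuous_comp_div (m + 1 / 2)
  rw [← hρ.integral_comp_div (by positivity) hx, sum_integral_cells cont, ← sub_sub,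
    intervalIntegral.integral_add_adjacent_intervals (cont.intervalIntegrable _ _)
      (cont.intervalIntegrable _ _)]

lemma le_integral_cell (hL : 0 < L) (hk : k + 1 / 2 ≤ L ∨ L ≤ k - 1 / 2) :
    ρ (k / L) ≤ ∫ y in (k - 1 / 2)..(k + 1 / 2), ρ (y / L) := by
  have int := (hρ.continuous_comp_div L).intervalIntegrable (μ := MeasureTheory.volume)
    (k - 1 / 2) (k + 1 / 2)
  rcases hk with hk | hk
  · rw [← integral_affine_cell k (ρ (k / L)) 0]
    refine intervalIntegral.integral_mono_on (by linarith) (by simp) int fun y hy ↦ ?_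
    rw [zero_mul, add_zero, hρ.eq_one (y / L) ((div_le_one hL).2 (by linarith [hy.2]))]
    exact hρ.le_one _
  · rw [← integral_affine_cell k (ρ (k / L)) (-(ρ (k / L - 1) / (k / L) / L))]
    refine intervalIntegral.integral_mono_on (by linarith)
      (Continuous.intervalIntegrable (by fun_prop) _ _) int fun y hy ↦ ?_
    convert hρ.sub_mul_sub_le ((one_le_div hL).2 (by linarith : L ≤ k))
      ((one_le_div hL).2 (by linarith [hy.1] : L ≤ y)) using 1
    rw [← sub_div]
    ring

lemma comp_div_le_mul_exp (L k y : ℝ) :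
    ρ (y / L) ≤ ρ (k / L) * exp (-(decayRate ρ (k / L) / L * (y - k))) := by
  convert hρ.le_mul_exp_neg_decayRate_mul (k / L) (y / L) using 4
  ring

lemma integral_cell_le (hL : 0 < L) (hq : decayRate ρ (k / L) / L ≤ q) (hq1 : q ≤ 1) :
    ∫ y in (k - 1 / 2)..(k + 1 / 2), ρ (y / L) ≤ ρ (k / L) * (1 + q ^ 2 / 4) := by
  have nonneg : 0 ≤ decayRate ρ (k / L) / L := div_nonneg (hρ.decayRate_nonneg _) hL.le
  calc ∫ y in (k - 1 / 2)..(k + 1 / 2), ρ (y / L)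
      ≤ ∫ y in (k - 1 / 2)..(k + 1 / 2),
          ρ (k / L) * exp (-(decayRate ρ (k / L) / L * (y - k))) :=
        intervalIntegral.integral_mono (by linarith)
          ((hρ.continuous_comp_div L).intervalIntegrable _ _)
          (Continuous.intervalIntegrable (by fun_prop) _ _) fun y ↦ hρ.comp_div_le_mul_exp L k y
    _ ≤ ρ (k / L) * (1 + (decayRate ρ (k / L) / L) ^ 2 / 4) := by
        rw [intervalIntegral.integral_const_mul]
        refine mul_le_mul_of_nonneg_left (integral_exp_cell_le ?_ k) (hρ.pos _).le
        rw [abs_of_nonneg nonneg]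
        linarith
    _ ≤ ρ (k / L) * (1 + q ^ 2 / 4) := by
        have := hρ.pos (k / L)
        gcongr

lemma integral_half_cell_le (hx : decayRate ρ (x / L) / L ≤ 1) :
    ∫ y in (x - 1 / 2)..x, ρ (y / L) ≤ ρ (x / L) := by
  have exp_half_le : exp (1 / 2) ≤ 2 := by
    have : exp (1 / 2) * exp (1 / 2) = exp 1 := by rw [← exp_add]; norm_num
    nlinarith [exp_one_lt_d9, exp_pos (1 / 2)]
  calc ∫ y in (x - 1 / 2)..x, ρ (y / L) ≤ ∫ _ in (x - 1 / 2)..x, ρ (x / L) * 2 := by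
        refine intervalIntegral.integral_mono_on (by linarith)
          ((hρ.continuous_comp_div L).intervalIntegrable _ _) (by simp) fun y hy ↦ ?_
        refine (hρ.comp_div_le_mul_exp L x y).trans ?_
        refine mul_le_mul_of_nonneg_left (le_trans (exp_le_exp.2 ?_) exp_half_le) (hρ.pos _).le
        nlinarith [hy.1, hy.2]
    _ = ρ (x / L) := by
        rw [intervalIntegral.integral_const, smul_eq_mul]
        ring

lemma permProb_le (hm : 1 ≤ m) (n : ℕ) : permProb n m ≤ ρ (n / (m + 1 / 2)) := by
  have hL : (0 : ℝ) < m + 1 / 2 := by positivity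
  refine le_of_friable_recurrence (N := n) (m := m) (f := fun n ↦ permProb n m)
    (g := fun n ↦ ρ (n / (m + 1 / 2))) (fun k hk ↦ ?_) (fun k hk ↦ ?_) (fun k hk ↦ ?_) n le_rfl
  · have : (k : ℝ) ≤ m := Nat.cast_le.2 hk
    rw [permProb_eq_one hk, hρ.eq_one _ ((div_le_one hL).2 (by linarith))]
  · exact (mul_permProb hm (mem_Ioc.1 hk).1.le).le
  · have hmk : (m : ℝ) + 1 ≤ k := by exact_mod_cast (mem_Ioc.1 hk).1
    rw [hρ.mul_eq_sum_integral_cells (by linarith)]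
    refine le_add_of_le_of_nonneg (sum_le_sum fun j hj ↦ ?_)
      (intervalIntegral.integral_nonneg (by linarith) fun y _ ↦ (hρ.pos _).le)
    rw [← Nat.cast_sub (by grind)]
    refine hρ.le_integral_cell hL ((le_or_gt (k - j) m).imp (fun h ↦ ?_) fun h ↦ ?_)
    · have : ((k - j : ℕ) : ℝ) ≤ m := Nat.cast_le.2 h
      linarith
    · have : (m : ℝ) + 1 ≤ (k - j : ℕ) := by exact_mod_cast h
      linarith

lemma mul_le_sum (hm : 1 ≤ m) (hmn : m ≤ n) :
    n * ρ (n / m) ≤ ∑ j ∈ Icc 1 m, ρ ((n - j : ℕ) / m) := by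
  have anti : Antitone fun y : ℝ ↦ ρ (y / m) := fun x y hxy ↦ hρ.antitone (by gcongr)
  calc n * ρ (n / m) = ∫ y in ((n - m : ℕ) : ℝ)..n, ρ (y / m) := by
        rw [Nat.cast_sub hmn, hρ.integral_comp_div (Nat.cast_pos.2 hm) (Nat.cast_le.2 hmn)]
    _ ≤ ∑ k ∈ Ico (n - m) n, ρ (k / m) :=
        (anti.antitoneOn _).integral_le_sum_Ico (Nat.sub_le n m)
    _ = ∑ j ∈ Icc 1 m, ρ ((n - j : ℕ) / m) :=
        sum_nbij' (n - ·) (n - ·) (by grind) (by grind) (by grind) (by grind)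
          fun k hk ↦ by rw [Nat.sub_sub_self (mem_Ico.1 hk).2.le]

lemma le_permProb (hm : 1 ≤ m) (n : ℕ) : ρ (n / m) ≤ permProb n m :=
  le_of_friable_recurrence (N := n) (m := m) (f := fun n ↦ ρ (n / m))
    (fun _ hk ↦ (hρ.le_one _).trans_eq (permProb_eq_one hk).symm)
    (fun _ hk ↦ hρ.mul_le_sum hm (mem_Ioc.1 hk).1.le)
    (fun _ hk ↦ (mul_permProb hm (mem_Ioc.1 hk).1.le).ge) n le_rfl

lemma permProb_pos (hm : 1 ≤ m) (n : ℕ) : 0 < permProb n m :=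
  (hρ.pos _).trans_le (hρ.le_permProb hm n)

lemma mul_le_one_add_mul_sum (hmn : m ≤ n)
    (hq : decayRate ρ ((n + 1) / (m + 1 / 2)) / (m + 1 / 2) ≤ q) (hq1 : q ≤ 1) :
    n * ρ ((n + 1) / (m + 1 / 2)) ≤
      (1 + q ^ 2 / 4) * ∑ j ∈ Icc 1 m, ρ ((n + 1 - j) / (m + 1 / 2)) := by
  have hL : (0 : ℝ) < m + 1 / 2 := by positivity
  have hmn' : (m : ℝ) ≤ n := Nat.cast_le.2 hmn
  have cells := hρ.mul_eq_sum_integral_cells (m := m) (x := n + 1) (by linarith)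
  have half_cell := hρ.integral_half_cell_le (hq.trans hq1)
  have cells_le : ∑ j ∈ Icc 1 m, (∫ y in ((n : ℝ) + 1 - j - 1 / 2)..(n + 1 - j + 1 / 2),
      ρ (y / (m + 1 / 2))) ≤ ∑ j ∈ Icc 1 m, ρ ((n + 1 - j) / (m + 1 / 2)) * (1 + q ^ 2 / 4) := by
    refine sum_le_sum fun j _ ↦ hρ.integral_cell_le hL (le_trans ?_ hq) hq1
    have : (0 : ℝ) ≤ j := j.cast_nonneg
    gcongr
    exact hρ.monotone_decayRate (by gcongr; linarith)
  rw [← sum_mul] at cells_le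
  linarith

-- The exponential factor absorbs the quadrature error `1 + q ^ 2 / 4` of each step of the
-- recurrence, since the steps have mean length about `m / 2`.
lemma mul_mul_exp_le_sum (hm : 1 ≤ m) (hmn : m ≤ n)
    (hq : decayRate ρ ((n + 1) / (m + 1 / 2)) / (m + 1 / 2) ≤ q) (hq1 : q ≤ 1) :
    n * (ρ ((n + 1) / (m + 1 / 2)) * exp (-(q ^ 2 / (2 * m) * n))) ≤
      ∑ j ∈ Icc 1 m,
        ρ (((n - j : ℕ) + 1) / (m + 1 / 2)) * exp (-(q ^ 2 / (2 * m) * (n - j : ℕ))) := by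
  have : (0 : ℝ) < m := Nat.cast_pos.2 hm
  set t : ℝ := q ^ 2 / (2 * m) with ht
  have mono : Monotone fun j : ℕ ↦ ρ ((n + 1 - j) / (m + 1 / 2)) :=
    fun i j hij ↦ hρ.antitone (by gcongr)
  have quadrature : 1 + q ^ 2 / 4 = 1 + t * m / 2 := by
    rw [ht]
    field_simp
    ring
  calc n * (ρ ((n + 1) / (m + 1 / 2)) * exp (-(t * n)))
      ≤ (1 + t * m / 2) * (∑ j ∈ Icc 1 m, ρ ((n + 1 - j) / (m + 1 / 2))) * exp (-(t * n)) := by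
        rw [← mul_assoc, ← quadrature]
        exact mul_le_mul_of_nonneg_right (hρ.mul_le_one_add_mul_sum hmn hq hq1) (exp_pos _).le
    _ ≤ (∑ j ∈ Icc 1 m, ρ ((n + 1 - j) / (m + 1 / 2)) * exp (t * j)) * exp (-(t * n)) := by
        gcongr
        exact one_add_mul_sum_le_sum_mul_exp mono (fun j ↦ (hρ.pos _).le) (by positivity) m
    _ = ∑ j ∈ Icc 1 m,
          ρ (((n - j : ℕ) + 1) / (m + 1 / 2)) * exp (-(t * (n - j : ℕ))) := by
        rw [sum_mul]
        refine sum_congr rfl fun j hj ↦ ?_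
        rw [Nat.cast_sub (by grind), mul_assoc, ← exp_add]
        congr 3 <;> ring

lemma mul_exp_le_permProb (hm : 1 ≤ m)
    (hq : decayRate ρ ((n + 1) / (m + 1 / 2)) ≤ q * m) (hq1 : q ≤ 1) :
    ρ ((n + 1) / (m + 1 / 2)) * exp (-(q ^ 2 / (2 * m) * n)) ≤ permProb n m := by
  have hq0 : 0 ≤ q :=
    nonneg_of_mul_nonneg_left ((hρ.decayRate_nonneg _).trans hq) (Nat.cast_pos.2 hm)
  refine le_of_friable_recurrence (N := n) (m := m)
    (f := fun n ↦ ρ ((n + 1) / (m + 1 / 2)) * exp (-(q ^ 2 / (2 * m) * n)))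
    (g := fun n ↦ permProb n m) (fun k hk ↦ ?_) (fun k hk ↦ ?_)
    (fun k hk ↦ (mul_permProb hm (mem_Ioc.1 hk).1.le).ge) n le_rfl
  · rw [permProb_eq_one hk]
    exact mul_le_one₀ (hρ.le_one _) (exp_pos _).le
      (exp_le_one_iff.2 (neg_nonpos.2 (by positivity)))
  · obtain ⟨hmk, hkn⟩ := mem_Ioc.1 hk
    refine hρ.mul_mul_exp_le_sum hm hmk.le ?_ hq1
    have : decayRate ρ ((k + 1) / (m + 1 / 2)) ≤ decayRate ρ ((n + 1) / (m + 1 / 2)) :=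
      hρ.monotone_decayRate (by gcongr)
    rw [div_le_iff₀ (by positivity)]
    nlinarith

end IsExtendedDickman

lemma two_mul_div_le_add_inv {u : ℝ} (hu : 0 < u) (l m : ℝ) :
    2 * (l / m) ≤ u * l ^ 2 / m ^ 2 + 1 / u := by
  have complete_square : u * l ^ 2 / m ^ 2 + 1 / u - 2 * (l / m) = u * (l / m - 1 / u) ^ 2 := by
    field_simp
    ring
  have : 0 ≤ u * (l / m - 1 / u) ^ 2 := by positivity
  linarith

lemma xi_sub_inv_le_xi {u m : ℝ} (hu : 6 ≤ u) (hm : 1 ≤ m) :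
    xi u - 1 / m ≤ xi ((u * m + 1) / (m + 1 / 2)) := by
  have four_le : 4 ≤ (u * m + 1) / (m + 1 / 2) := by
    rw [le_div_iff₀ (by positivity)]
    nlinarith
  have le_u : (u * m + 1) / (m + 1 / 2) ≤ u := by
    rw [div_le_iff₀ (by positivity)]
    linarith
  have div_le : u / ((u * m + 1) / (m + 1 / 2)) ≤ 1 + 1 / (2 * m) := by
    have : 0 < u * m + 1 := by positivity
    rw [div_div_eq_mul_div, div_le_iff₀ this,
      show (1 + 1 / (2 * m)) * (u * m + 1) = u * (m + 1 / 2) + (1 + 1 / (2 * m)) by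
        field_simp]
    exact le_add_of_nonneg_right (by positivity)
  have log_le : log (u / ((u * m + 1) / (m + 1 / 2))) ≤ 1 / (2 * m) := by
    have := log_le_sub_one_of_pos (show 0 < u / ((u * m + 1) / (m + 1 / 2)) by positivity)
    linarith
  have : 1 / m = 2 * (1 / (2 * m)) := by field_simp
  linarith [xi_sub_xi_le four_le le_u]

lemma mul_div_two_mul_sub_le {u m ξ l : ℝ} (hu : 2 ≤ u) (hm : 0 < m) (hξ : 0 ≤ ξ)
    (hξl : ξ ≤ 2 * l) (hl : 1 ≤ l) :
    u * ξ / (2 * m) - (u * l ^ 2 / m ^ 2 + 2 * (l / m)) ≤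
      (ξ - 1 / m) * ((u - 2) / (2 * m + 1)) := by
  have expand : u * ξ / (2 * m) - (ξ - 1 / m) * ((u - 2) / (2 * m + 1)) =
      ξ * (u / (2 * m * (2 * m + 1))) + ξ * (2 / (2 * m + 1)) + (u - 2) / (m * (2 * m + 1)) := by
    field_simp
    ring
  have first_le : ξ * (u / (2 * m * (2 * m + 1))) ≤ 2 * l * (u / (2 * m * (2 * m))) := by
    gcongr
    linarith
  have second_le : ξ * (2 / (2 * m + 1)) ≤ 2 * l * (2 / (2 * m)) := by
    gcongr
    linarith
  have third_le : (u - 2) / (m * (2 * m + 1)) ≤ u / (m * (2 * m)) := by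
    gcongr <;> linarith
  have l_sq : (l + 1) * (u / (2 * m ^ 2)) ≤ 2 * l ^ 2 * (u / (2 * m ^ 2)) := by
    gcongr
    nlinarith
  have sum_eq : 2 * l * (u / (2 * m * (2 * m))) + 2 * l * (2 / (2 * m)) + u / (m * (2 * m)) =
      (l + 1) * (u / (2 * m ^ 2)) + 2 * (l / m) := by
    field_simp
    ring
  have : 2 * l ^ 2 * (u / (2 * m ^ 2)) = u * l ^ 2 / m ^ 2 := by field_simp
  linarith

namespace IsExtendedDickman

variable {ρ : ℝ → ℝ} (hρ : IsExtendedDickman ρ) {n m : ℕ} {u : ℝ}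

include hρ

lemma log_permProb_sub_le (hm : 1 ≤ m) (hu : 1 ≤ u) (hn : n = u * m) :
    log (permProb n m) - log (ρ u) - u * xi u / (2 * m) ≤ 1 / (2 * m) := by
  have : (0 : ℝ) < m := Nat.cast_pos.2 hm
  have log_le := log_le_log (hρ.permProb_pos hm n) (hρ.permProb_le hm n)
  have tangent := hρ.log_le_log_sub_decayRate_mul u (n / (m + 1 / 2))
  have shift : (n : ℝ) / (m + 1 / 2) - u = -(u / (2 * m + 1)) := by
    rw [hn]
    field_simp
    ring
  have rate_mul_le : decayRate ρ u * (u / (2 * m + 1)) ≤ u * xi u / (2 * m) + 1 / (2 * m) :=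
    calc decayRate ρ u * (u / (2 * m + 1)) ≤ (xi u + 1 / u) * (u / (2 * m)) := by
          have := xi_nonneg u
          gcongr
          · exact hρ.decayRate_le_xi_add hu
          · linarith
      _ = u * xi u / (2 * m) + 1 / (2 * m) := by field_simp
  rw [shift] at tangent
  linarith

lemma neg_mul_log_div_le_log_permProb_sub (hm : 1 ≤ m) (hu : 0 ≤ u) (hn : n = u * m) :
    -(u * log (u + 1) / m) ≤ log (permProb n m) - log (ρ u) - u * xi u / (2 * m) := by
  have hm0 : (0 : ℝ) < m := Nat.cast_pos.2 hm
  have log_le := log_le_log (hρ.pos _) (hρ.le_permProb hm n)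
  rw [hn, mul_div_cancel_right₀ u hm0.ne'] at log_le
  have main_term_le : u * xi u / (2 * m) ≤ u * log (u + 1) / m :=
    calc u * xi u / (2 * m) ≤ u * (2 * log (u + 1)) / (2 * m) := by
          gcongr
          exact xi_le_two_mul_log hu
      _ = u * log (u + 1) / m := by field_simp
  linarith

lemma log_sub_le_log_permProb (hm : 1 ≤ m) (hu : 6 ≤ u) (hn : n = u * m)
    (hlog : 4 * log (u + 1) ≤ m) (one_le_log : 1 ≤ log (u + 1)) :
    log (ρ ((u * m + 1) / (m + 1 / 2))) - 8 * (u * log (u + 1) ^ 2 / m ^ 2) ≤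
      log (permProb n m) := by
  have hm0 : (0 : ℝ) < m := Nat.cast_pos.2 hm
  have rate_le : decayRate ρ ((n + 1) / (m + 1 / 2)) ≤ 4 * log (u + 1) / m * m :=
    calc decayRate ρ ((n + 1) / (m + 1 / 2)) ≤ decayRate ρ u := hρ.monotone_decayRate <| by
          rw [div_le_iff₀ (by positivity), hn]
          linarith
      _ ≤ 2 * log (u + 1) + 1 := by
          have := hρ.decayRate_le_xi_add (by linarith : 1 ≤ u)
          have := xi_le_two_mul_log (by linarith : 0 ≤ u)
          have : 1 / u ≤ 1 := (div_le_one (by linarith)).2 (by linarith)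
          linarith
      _ ≤ 4 * log (u + 1) / m * m := by
          rw [div_mul_cancel₀ _ hm0.ne']
          linarith
  have := log_le_log (mul_pos (hρ.pos _) (exp_pos _))
    (hρ.mul_exp_le_permProb hm rate_le ((div_le_one hm0).2 hlog))
  rw [log_mul (hρ.pos _).ne' (exp_pos _).ne', log_exp, hn] at this
  convert this using 1
  field_simp
  ring

lemma neg_le_log_permProb_sub_of_log_le (hm : 1 ≤ m) (hu : 6 ≤ u) (hn : n = u * m)
    (hlog : 4 * log (u + 1) ≤ m) :
    -(9 * (u * log (u + 1) ^ 2 / m ^ 2) + 2 * (log (u + 1) / m)) ≤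
      log (permProb n m) - log (ρ u) - u * xi u / (2 * m) := by
  have hm1 : (1 : ℝ) ≤ m := Nat.one_le_cast.2 hm
  have one_le_log : 1 ≤ log (u + 1) :=
    (le_log_iff_exp_le (by linarith)).2 (by linarith [exp_one_lt_d9])
  set v : ℝ := (u * m + 1) / (m + 1 / 2) with hv
  have shift : u - v = (u - 2) / (2 * m + 1) := by
    rw [hv]
    field_simp
    ring
  have one_lt_v : 1 < v := by
    rw [hv, one_lt_div (by positivity)]
    nlinarith
  have tangent := hρ.log_le_log_sub_decayRate_mul v u
  have rate_ge : (xi u - 1 / m) * (u - v) ≤ decayRate ρ v * (u - v) := by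
    refine mul_le_mul_of_nonneg_right
      ((xi_sub_inv_le_xi hu hm1).trans (hρ.xi_le_decayRate one_lt_v)) ?_
    rw [shift]
    exact div_nonneg (by linarith) (by positivity)
  have main_term := mul_div_two_mul_sub_le (u := u) (by linarith) (zero_lt_one.trans_le hm1)
    (xi_nonneg u) (xi_le_two_mul_log (by linarith)) one_le_log
  rw [← shift] at main_term
  linarith [hρ.log_sub_le_log_permProb hm hu hn hlog one_le_log]

lemma neg_mul_error_le_log_permProb_sub (hm : 1 ≤ m) (hu : 1 ≤ u) (hn : n = u * m) :
    -(10 * (u * log (u + 1) ^ 2 / m ^ 2 + 1 / u)) ≤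
      log (permProb n m) - log (ρ u) - u * xi u / (2 * m) := by
  have : (0 : ℝ) < m := Nat.cast_pos.2 hm
  have log_nonneg : 0 ≤ log (u + 1) := log_nonneg (by linarith)
  have am_gm := two_mul_div_le_add_inv (by positivity : 0 < u) (log (u + 1)) m
  have inv_nonneg : 0 ≤ 1 / u := by positivity
  have sq_nonneg : 0 ≤ u * log (u + 1) ^ 2 / m ^ 2 := by positivity
  have crude := hρ.neg_mul_log_div_le_log_permProb_sub hm (by positivity) hn
  rcases lt_or_ge u 6 with hu6 | hu6
  · have : u * log (u + 1) / m ≤ 6 * (log (u + 1) / m) := by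
      rw [mul_div_assoc]
      gcongr
    linarith
  rcases le_total (4 * log (u + 1)) m with hlog | hlog
  · linarith [hρ.neg_le_log_permProb_sub_of_log_le hm hu6 hn hlog]
  · have : u * log (u + 1) / m ≤ 4 * (u * log (u + 1) ^ 2 / m ^ 2) :=
      calc u * log (u + 1) / m = u * log (u + 1) / m ^ 2 * m := by field_simp
        _ ≤ u * log (u + 1) / m ^ 2 * (4 * log (u + 1)) := by gcongr
        _ = 4 * (u * log (u + 1) ^ 2 / m ^ 2) := by ring
    linarith

end IsExtendedDickman

lemma one_div_two_mul_le_error {u : ℝ} (hu : 1 ≤ u) {m : ℝ} (hm : 0 < m) :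
    1 / (2 * m) ≤ u * log (u + 1) ^ 2 / m ^ 2 + 1 / u := by
  have half_le : 1 / 2 ≤ log (u + 1) := by
    have := log_le_log two_pos (show 2 ≤ u + 1 by linarith)
    linarith [log_two_gt_d9]
  have am_gm := two_mul_div_le_add_inv (by positivity : 0 < u) (log (u + 1)) m
  have : 1 / (2 * m) ≤ 2 * (log (u + 1) / m) := by
    rw [← div_div, ← mul_div_assoc]
    gcongr
    linarith
  exact this.trans am_gm

/-- There exists an absolute constant `C > 0` such that for all integers
`n ≥ m ≥ 1`, writing `u = n/m`, one has
`|log p_{n,m} − log ρ(u) − u·ξ(u)/(2m)| ≤ C·(u·(log(u+1))²/m² + 1/u)`. -/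
theorem stmt0 :
    ∃ C : ℝ, 0 < C ∧ ∀ n m : ℕ, 1 ≤ m → m ≤ n → ∀ ρ : ℝ → ℝ, IsDickman ρ →
      ∀ u : ℝ, u = (n : ℝ) / (m : ℝ) →
      |Real.log (permProb n m) - Real.log (ρ u) - u * xi u / (2 * (m : ℝ))| ≤
        C * (u * (Real.log (u + 1)) ^ 2 / (m : ℝ) ^ 2 + 1 / u) := by
  refine ⟨10, by norm_num, fun n m hm hmn ρ hρ u hu ↦ ?_⟩
  have hm0 : (0 : ℝ) < m := Nat.cast_pos.2 hm
  have hn : (n : ℝ) = u * m := ((eq_div_iff hm0.ne').1 hu).symm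
  have hu1 : 1 ≤ u := hu ▸ (one_le_div hm0).2 (Nat.cast_le.2 hmn)
  have lower := hρ.extend.neg_mul_error_le_log_permProb_sub hm hu1 hn
  have upper := hρ.extend.log_permProb_sub_le hm hu1 hn
  have error_ge := one_div_two_mul_le_error hu1 hm0
  have error_pos : 0 ≤ 1 / (2 * (m : ℝ)) := by positivity
  rw [max_eq_left (zero_le_one.trans hu1)] at lower upper
  exact abs_le.2 ⟨lower, by linarith⟩
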